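/- For words over the four-letter alphabet {a, a⁻¹, b, b⁻¹}, the number of reduced bracelets of length n that are not proper powers (i.e., no representative word is a concatenation of k ≥ 2 copies of a shorter word) is: 2 for n = 1, 2 for n = 2, 4 for n = 3, 9 for n = 4, 24 for n = 5, 58 for n = 6, 156 for n = 7, 405 for n = 8, 1092 for n = 9, and 2940 for n = 10. -/

import Mathlib

/-- The group-theoretic inverse of a letter in the alphabet `{a, a⁻¹, b, b⁻¹}`,
where a letter is a pair (generator, sign). -/
def invLetter (x : Fin 2 × Bool) : Fin 2 × Bool := (x.1, !x.2)

/-- The group-theoretic inverse of a word: reverse the word and invert each letter. -/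
def wordInv (l : List (Fin 2 × Bool)) : List (Fin 2 × Bool) := (l.map invLetter).reverse

/-- A word is freely reduced if no two adjacent letters are mutually inverse. -/
def FreelyReduced (l : List (Fin 2 × Bool)) : Prop :=
  l.Chain' (fun x y => y ≠ invLetter x)

/-- A word is cyclically reduced if it is freely reduced and its first letter is
not the inverse of its last letter. -/
def CyclicallyReduced (l : List (Fin 2 × Bool)) : Prop :=
  FreelyReduced l ∧ ∀ x ∈ l.head?, ∀ y ∈ l.getLast?, x ≠ invLetter y

/-- The type of freely and cyclically reduced words of length `n` over the
alphabet `{a, a⁻¹, b, b⁻¹}`. -/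
def CRWord (n : ℕ) := {l : List (Fin 2 × Bool) // l.length = n ∧ CyclicallyReduced l}

/-- One basic move between cyclically reduced words: a cyclic rotation or a
group-theoretic inversion.  Reduced bracelets are the classes of the
equivalence relation generated by these moves. -/
def braceletStep (n : ℕ) (x y : CRWord n) : Prop :=
  y.val = x.val.rotate 1 ∨ y.val = wordInv x.val

/-- A word is a proper power if it is the concatenation of `k ≥ 2` copies of a
shorter word. -/
def IsProperPower (l : List (Fin 2 × Bool)) : Prop :=
  ∃ (k : ℕ) (m : List (Fin 2 × Bool)), 2 ≤ k ∧ m.length < l.length ∧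
    l = (List.replicate k m).flatten

/-- The number of reduced bracelets of length `n` none of whose representative
words is a proper power (the "Lyndon word" count of the paper). -/
noncomputable def lyndonBraceletCount (n : ℕ) : ℕ :=
  Nat.card {c : Quot (braceletStep n) //
    ∀ l : CRWord n, Quot.mk (braceletStep n) l = c → ¬ IsProperPower l.val}

/-!
A reduced word is never a rotation of its inverse: it would split as `u ++ v` with `u` and `v` each
their own inverse, and a free group has no element of order two. So the bracelet of a word consists
of the rotations of the word and of its inverse, `2 * d` words in all, where `d` is the rotation
period; and `d` is the length `n` exactly when the word is not a proper power.

Cyclically reduced words of length `n` are the closed walks of length `n` in the graph joining any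
two letters that are not mutually inverse (loops included), so their number is the trace
`3 ^ n + 2 + (-1) ^ n` of a matrix power. Each of them is a power of a word of length `d ∣ n` with
rotation period `d`, hence this number is also the sum over `d ∣ n` of `2 * d` times the number of
bracelets of length `d` that are not proper powers, and Möbius inversion isolates the term `d = n`.
-/

theorem ncard_eq_sum_ncard_fiber {α β : Type*} {s : Set α} (hs : s.Finite)
    {t : Finset β} {f : α → β} (hf : Set.MapsTo f s t) :
    s.ncard = ∑ b ∈ t, {a ∈ s | f a = b}.ncard := by
  classical
  lift s to Finset α using hs
  rw [Set.ncard_coe_finset, Finset.card_eq_sum_card_fiberwise hf]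
  refine Finset.sum_congr rfl fun b _ ↦ ?_
  rw [← Set.ncard_coe_finset, Finset.coe_filter]
  rfl

theorem ncard_eq_ncard_mul_of_ncard_fiber_eq {α β : Type*} {s : Set α} {t : Set β}
    (hs : s.Finite) (ht : t.Finite) {f : α → β} (hf : Set.MapsTo f s t) {k : ℕ}
    (hk : ∀ b ∈ t, {a ∈ s | f a = b}.ncard = k) : s.ncard = t.ncard * k := by
  classical
  lift t to Finset β using ht
  rw [ncard_eq_sum_ncard_fiber hs hf, Finset.sum_congr rfl hk, Finset.sum_const,
    Set.ncard_coe_finset, smul_eq_mul]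

section Rotation

open List

variable {α : Type*}

theorem rotate_flatten_replicate (m : List α) (k i : ℕ) :
    (replicate k m).flatten.rotate i = (replicate k (m.rotate i)).flatten := by
  induction i generalizing m with
  | zero => simp
  | succ i ih =>
    obtain _ | ⟨a, t⟩ := m
    · simp
    obtain _ | k := k
    · simp
    have cons_flatten (j : ℕ) :
        a :: (replicate j (t ++ [a])).flatten = (replicate j (a :: t)).flatten ++ [a] := by
      induction j with
      | zero => simp
      | succ j ihj => simp [replicate_succ, ihj]
    calc (replicate (k + 1) (a :: t)).flatten.rotate (i + 1)
        = (t ++ ((replicate k (a :: t)).flatten ++ [a])).rotate i := by simp [replicate_succ]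
      _ = (replicate (k + 1) (t ++ [a])).flatten.rotate i := by
        simp [← cons_flatten, replicate_succ]
      _ = (replicate (k + 1) ((a :: t).rotate (i + 1))).flatten := by
        rw [ih, rotate_cons_succ]

theorem eq_flatten_replicate_of_append_comm {u v : List α} {k : ℕ}
    (hlen : v.length = k * u.length) (h : u ++ v = v ++ u) : v = (replicate k u).flatten := by
  induction k generalizing v with
  | zero => simpa using hlen
  | succ k ih =>
    obtain ⟨w, rfl⟩ : u <+: v := prefix_of_prefix_length_le (prefix_append u v)
      (h ▸ prefix_append v u) (by rw [hlen]; exact Nat.le_mul_of_pos_left _ k.succ_pos)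
    rw [replicate_succ, flatten_cons, ← ih]
    · rw [length_append] at hlen
      linarith
    · simpa using h

theorem eq_flatten_replicate_take_of_rotate_eq {l : List α} {k d : ℕ} (hlen : l.length = k * d)
    (h : l.rotate d = l) : l = (replicate k (l.take d)).flatten := by
  obtain rfl | hk := Nat.eq_zero_or_pos k
  · simpa using hlen
  have hd : d ≤ l.length := hlen ▸ Nat.le_mul_of_pos_left d hk
  apply eq_flatten_replicate_of_append_comm
  · rw [length_take_of_le hd, hlen]
  · rw [rotate_eq_drop_append_take hd] at h
    calc l.take d ++ l = l.take d ++ (l.drop d ++ l.take d) := by rw [h]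
      _ = l ++ l.take d := by rw [← append_assoc, take_append_drop]

/-- The least `d > 0` such that rotating `l` by `d` letters gives back `l`. The empty word has
rotation period `1`. -/
noncomputable def rotationPeriod (l : List α) : ℕ :=
  Function.minimalPeriod (fun l : List α ↦ l.rotate 1) l

theorem iterate_rotate_one (l : List α) (i : ℕ) :
    (fun l : List α ↦ l.rotate 1)^[i] l = l.rotate i := by
  induction i with
  | zero => simp
  | succ i ih => rw [Function.iterate_succ_apply', ih, rotate_rotate]

theorem rotationPeriod_dvd_iff {l : List α} {i : ℕ} : rotationPeriod l ∣ i ↔ l.rotate i = l := by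
  rw [rotationPeriod, ← Function.isPeriodicPt_iff_minimalPeriod_dvd, Function.IsPeriodicPt,
    Function.IsFixedPt, iterate_rotate_one]

theorem rotate_rotationPeriod (l : List α) : l.rotate (rotationPeriod l) = l :=
  rotationPeriod_dvd_iff.1 dvd_rfl

theorem rotationPeriod_dvd_length (l : List α) : rotationPeriod l ∣ l.length :=
  rotationPeriod_dvd_iff.2 l.rotate_length

theorem rotationPeriod_pos (l : List α) : 0 < rotationPeriod l := by
  obtain rfl | hl := eq_or_ne l []
  · exact Nat.pos_of_dvd_of_pos (rotationPeriod_dvd_iff.2 (rotate_nil 1)) one_pos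
  · exact Nat.pos_of_dvd_of_pos (rotationPeriod_dvd_length l) (length_pos_of_ne_nil hl)

theorem rotationPeriod_flatten_replicate (m : List α) {k : ℕ} (hk : k ≠ 0) :
    rotationPeriod (replicate k m).flatten = rotationPeriod m := by
  refine Nat.dvd_right_iff_eq.1 fun i ↦ ?_
  rw [rotationPeriod_dvd_iff, rotationPeriod_dvd_iff, rotate_flatten_replicate]
  refine ⟨fun h ↦ ?_, fun h ↦ by rw [h]⟩
  obtain ⟨k, rfl⟩ := Nat.exists_eq_succ_of_ne_zero hk
  simp only [replicate_succ, flatten_cons] at h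
  exact append_inj_left h (m.length_rotate i)

theorem ncard_setOf_isRotated (l : List α) : {l' | l ~r l'}.ncard = rotationPeriod l := by
  have himage : {l' | l ~r l'} = (l.rotate ·) '' Set.Iio (rotationPeriod l) := by
    ext l'
    refine ⟨?_, fun ⟨i, _, hi⟩ ↦ ⟨i, hi⟩⟩
    rintro ⟨i, rfl⟩
    refine ⟨i % rotationPeriod l, Nat.mod_lt _ (rotationPeriod_pos l), ?_⟩
    simpa only [iterate_rotate_one, rotationPeriod] using
      Function.iterate_mod_minimalPeriod_eq (f := fun l : List α ↦ l.rotate 1) (x := l) (n := i)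
  have hinj : Set.InjOn (l.rotate ·) (Set.Iio (rotationPeriod l)) := by
    simpa only [iterate_rotate_one, rotationPeriod] using
      Function.iterate_injOn_Iio_minimalPeriod (f := fun l : List α ↦ l.rotate 1) (x := l)
  rw [himage, hinj.ncard_image, ← Finset.coe_Iio, Set.ncard_coe_finset, Nat.card_Iio]

theorem rotationPeriod_eq_of_isRotated {l l' : List α} (h : l ~r l') :
    rotationPeriod l = rotationPeriod l' := by
  rw [← ncard_setOf_isRotated, ← ncard_setOf_isRotated]
  congr 1
  ext w
  exact ⟨h.symm.trans, h.trans⟩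

theorem rotationPeriod_lt_length_iff {l : List α} :
    rotationPeriod l < l.length ↔
      ∃ (k : ℕ) (m : List α), 2 ≤ k ∧ m.length < l.length ∧ l = (replicate k m).flatten := by
  constructor
  · intro hlt
    obtain ⟨k, hk⟩ := rotationPeriod_dvd_length l
    refine ⟨k, l.take (rotationPeriod l), ?_, by simpa using hlt,
      eq_flatten_replicate_take_of_rotate_eq (by rw [hk, mul_comm]) (rotate_rotationPeriod l)⟩
    by_contra! hk2
    have hle : rotationPeriod l * k ≤ rotationPeriod l * 1 := Nat.mul_le_mul_left _ (by omega)
    omega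
  · rintro ⟨k, m, hk, hlt, rfl⟩
    rw [rotationPeriod_flatten_replicate m (by omega)]
    have hm : 0 < m.length := by
      by_contra! hm
      simp_all
    exact (Nat.le_of_dvd hm (rotationPeriod_dvd_length m)).trans_lt hlt

theorem image_flatten_replicate_setOf_rotationPeriod_eq {P : List α → Prop}
    (hP : ∀ (m : List α) (k : ℕ), k ≠ 0 → (P (replicate k m).flatten ↔ P m)) {d k : ℕ}
    (hk : k ≠ 0) :
    (fun m ↦ (replicate k m).flatten) '' {m | m.length = d ∧ P m ∧ rotationPeriod m = d} =
      {l | l.length = k * d ∧ P l ∧ rotationPeriod l = d} := by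
  ext l
  constructor
  · rintro ⟨m, ⟨rfl, hPm, hm⟩, rfl⟩
    exact ⟨by simp, (hP m k hk).2 hPm, (rotationPeriod_flatten_replicate m hk).trans hm⟩
  · rintro ⟨hlen, hPl, hl⟩
    have hpow := eq_flatten_replicate_take_of_rotate_eq hlen (rotationPeriod_dvd_iff.1 hl.dvd)
    refine ⟨l.take d, ⟨?_, ?_, ?_⟩, hpow.symm⟩
    · rw [length_take_of_le (hlen ▸ Nat.le_mul_of_pos_left d (by omega))]
    · rwa [← hP _ k hk, ← hpow]
    · rwa [← rotationPeriod_flatten_replicate _ hk, ← hpow]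

theorem ncard_setOf_length_eq_sum_divisors [Finite α] {P : List α → Prop}
    (hP : ∀ (m : List α) (k : ℕ), k ≠ 0 → (P (replicate k m).flatten ↔ P m)) {n : ℕ}
    (hn : n ≠ 0) :
    {l | l.length = n ∧ P l}.ncard =
      ∑ d ∈ n.divisors, {l | l.length = d ∧ P l ∧ rotationPeriod l = d}.ncard := by
  have hfin : {l | l.length = n ∧ P l}.Finite := (finite_length_eq α n).subset fun _ hl ↦ hl.1
  have hmaps : Set.MapsTo rotationPeriod {l | l.length = n ∧ P l} n.divisors := fun l hl ↦
    Nat.mem_divisors.2 ⟨hl.1 ▸ rotationPeriod_dvd_length l, hn⟩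
  rw [ncard_eq_sum_ncard_fiber hfin hmaps]
  refine Finset.sum_congr rfl fun d hd ↦ ?_
  obtain ⟨k, rfl⟩ := Nat.dvd_of_mem_divisors hd
  have hk : k ≠ 0 := by rintro rfl; exact hn (mul_zero d)
  have hinj : Set.InjOn (fun m ↦ (replicate k m).flatten)
      {m | m.length = d ∧ P m ∧ rotationPeriod m = d} := by
    rintro m ⟨hm, -⟩ m' ⟨hm', -⟩ h
    obtain ⟨k, rfl⟩ := Nat.exists_eq_succ_of_ne_zero hk
    simp only [replicate_succ, flatten_cons] at h
    exact append_inj_left h (hm.trans hm'.symm)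
  rw [← hinj.ncard_image, image_flatten_replicate_setOf_rotationPeriod_eq hP hk, mul_comm k d]
  simp only [Set.mem_ofPred_eq, and_assoc]

end Rotation

section CycleChain

variable {V : Type*} [Fintype V]

theorem ncard_setOf_length_succ (p : List V → Prop) (n : ℕ) :
    {l | l.length = n + 1 ∧ p l}.ncard = ∑ x, {t | t.length = n ∧ p (x :: t)}.ncard := by
  have hunion : {l | l.length = n + 1 ∧ p l} =
      ⋃ x, (x :: ·) '' {t | t.length = n ∧ p (x :: t)} := by
    ext l
    cases l <;> simp [and_assoc]
  have hfin (x : V) : {t | t.length = n ∧ p (x :: t)}.Finite :=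
    (List.finite_length_eq V n).subset fun _ ht ↦ ht.1
  have hdisj : Pairwise (Function.onFun Disjoint
      fun x : V ↦ (x :: ·) '' {t | t.length = n ∧ p (x :: t)}) := by
    intro x y hxy
    rw [Function.onFun, Set.disjoint_left]
    rintro _ ⟨t, -, rfl⟩ ⟨t', -, h⟩
    exact hxy (List.head_eq_of_cons_eq h).symm
  rw [hunion, Set.ncard_iUnion_of_finite (fun x ↦ (hfin x).image _) hdisj,
    finsum_eq_sum_of_fintype]
  exact Finset.sum_congr rfl fun x _ ↦ Set.ncard_image_of_injective _ List.cons_injective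

/-- The adjacency matrix of a relation `R`, loops included: its powers count the walks along
`R`. -/
def relMatrix (S : Type*) [Zero S] [One S] (R : V → V → Prop) [DecidableRel R] : Matrix V V S :=
  Matrix.of fun a b ↦ if R a b then 1 else 0

variable [DecidableEq V] (S : Type*) [Semiring S] (R : V → V → Prop) [DecidableRel R]

theorem cast_ncard_isChain_eq_relMatrix_pow (n : ℕ) (a z : V) :
    ({t | t.length = n ∧ (a :: (t ++ [z])).IsChain R}.ncard : S) =
      (relMatrix S R ^ (n + 1)) a z := by
  induction n generalizing a with
  | zero =>
    by_cases h : R a z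
    · have hnil : {t : List V | t.length = 0 ∧ (a :: (t ++ [z])).IsChain R} = {[]} := by
        ext t; cases t <;> simp [h]
      rw [hnil]
      simp [relMatrix, h]
    · have hempty : {t : List V | t.length = 0 ∧ (a :: (t ++ [z])).IsChain R} = ∅ := by
        ext t; cases t <;> simp [h]
      rw [hempty]
      simp [relMatrix, h]
  | succ n ih =>
    rw [ncard_setOf_length_succ fun t ↦ (a :: (t ++ [z])).IsChain R, pow_succ', Matrix.mul_apply,
      Nat.cast_sum]
    refine Finset.sum_congr rfl fun b _ ↦ ?_
    rw [← ih]
    by_cases h : R a b <;> simp [relMatrix, h]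

theorem cast_ncard_cycleChain_eq_trace_relMatrix_pow {n : ℕ} (hn : n ≠ 0) :
    ({l : List V | l.length = n ∧ Cycle.Chain R l}.ncard : S) =
      (relMatrix S R ^ n).trace := by
  obtain ⟨n, rfl⟩ := Nat.exists_eq_add_one_of_ne_zero hn
  rw [ncard_setOf_length_succ fun l : List V ↦ Cycle.Chain R (l : Cycle V), Nat.cast_sum]
  simp only [Cycle.chain_coe_cons, cast_ncard_isChain_eq_relMatrix_pow, Matrix.trace,
    Matrix.diag_apply]

end CycleChain

section FreeGroup

open List FreeGroup

variable {α : Type*}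

/-- Two letters of the alphabet `α × Bool` of the free group that may be adjacent in a reduced
word, in the form in which `FreeGroup.IsReduced` states it. -/
def NonCancelling (a b : α × Bool) : Prop := a.1 = b.1 → a.2 = b.2

theorem nonCancelling_iff {a b : α × Bool} : NonCancelling a b ↔ b ≠ (a.1, !a.2) := by
  rw [NonCancelling, Ne, Prod.ext_iff]
  grind

instance [DecidableEq α] : DecidableRel (NonCancelling (α := α)) :=
  fun a b ↦ inferInstanceAs (Decidable (a.1 = b.1 → a.2 = b.2))

theorem isCyclicallyReduced_iff_cycleChain {l : List (α × Bool)} :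
    IsCyclicallyReduced l ↔ Cycle.Chain NonCancelling (l : Cycle (α × Bool)) := by
  obtain _ | ⟨a, t⟩ := l
  · simp
  · rw [Cycle.chain_coe_cons, ← cons_append, isChain_append]
    simp only [isChain_singleton, head?_cons, true_and]
    rfl

theorem isCyclicallyReduced_of_isRotated {l l' : List (α × Bool)} (h : l ~r l')
    (hl : IsCyclicallyReduced l) : IsCyclicallyReduced l' := by
  rw [isCyclicallyReduced_iff_cycleChain] at hl ⊢
  rwa [← Cycle.coe_eq_coe.2 h]

theorem isCyclicallyReduced_invRev {l : List (α × Bool)} (hl : IsCyclicallyReduced l) :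
    IsCyclicallyReduced (invRev l) := by
  have hsymm {a b : α × Bool} (h : NonCancelling a b) :
      NonCancelling (b.1, !b.2) (a.1, !a.2) := fun heq ↦
    congrArg (!·) (h heq.symm).symm
  refine ⟨isChain_reverse.2 (isChain_map _ |>.2 (hl.1.imp fun _ _ ↦ hsymm)), ?_⟩
  simp only [invRev, getLast?_reverse, head?_reverse, head?_map, getLast?_map, Option.mem_map]
  rintro _ ⟨a, ha, rfl⟩ _ ⟨b, hb, rfl⟩
  exact hsymm (hl.2 b hb a ha)

theorem isCyclicallyReduced_flatten_replicate_iff (l : List (α × Bool)) (k : ℕ) (hk : k ≠ 0) :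
    IsCyclicallyReduced (replicate k l).flatten ↔ IsCyclicallyReduced l := by
  refine ⟨fun h ↦ ?_, fun h ↦ h.flatten_replicate k⟩
  rw [isCyclicallyReduced_iff, head?_flatten_replicate hk, getLast?_flatten_replicate hk] at h
  obtain ⟨k, rfl⟩ := Nat.exists_eq_add_one_of_ne_zero hk
  rw [replicate_succ, flatten_cons] at h
  exact ⟨h.1.infix (prefix_append _ _).isInfix, h.2⟩

theorem eq_nil_of_invRev_eq_self {l : List (α × Bool)} (hl : FreeGroup.IsReduced l)
    (h : invRev l = l) : l = [] := by
  have hone : FreeGroup.mk l = 1 := by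
    rw [← inv_eq_self, inv_mk, h]
  classical
  rw [← hl.reduce_eq, ← toWord_mk, hone, toWord_one]

theorem not_isRotated_invRev {l : List (α × Bool)} (hl : FreeGroup.IsReduced l) (hne : l ≠ []) :
    ¬ l ~r invRev l := by
  intro h
  obtain ⟨i, hi, h⟩ := isRotated_iff_mod.1 h
  rw [rotate_eq_drop_append_take hi, eq_comm] at h
  nth_rw 1 [← take_append_drop i l] at h
  rw [invRev_append] at h
  obtain ⟨hdrop, htake⟩ := append_inj h invRev_length
  apply hne
  rw [← take_append_drop i l,
    eq_nil_of_invRev_eq_self (hl.infix (take_prefix i l).isInfix) htake,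
    eq_nil_of_invRev_eq_self (hl.infix (drop_suffix i l).isInfix) hdrop, append_nil]

theorem isRotated_invRev {l l' : List (α × Bool)} (h : l ~r l') : invRev l ~r invRev l' :=
  (h.map _).reverse

theorem invRev_isRotated_iff {l l' : List (α × Bool)} : invRev l ~r l' ↔ l ~r invRev l' := by
  constructor <;> intro h <;> simpa using isRotated_invRev h

theorem rotationPeriod_invRev (l : List (α × Bool)) :
    rotationPeriod (invRev l) = rotationPeriod l := by
  have himage : {l' | invRev l ~r l'} = invRev '' {l' | l ~r l'} := by
    rw [invRev_involutive.image_eq_preimage_symm]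
    ext l'
    exact invRev_isRotated_iff
  rw [← ncard_setOf_isRotated, himage, Set.ncard_image_of_injective _ invRev_injective,
    ncard_setOf_isRotated]

/-- Two words represent the same bracelet: they agree up to rotation and inversion. -/
def BraceletEquiv (l l' : List (α × Bool)) : Prop := l ~r l' ∨ invRev l ~r l'

theorem braceletEquiv_equivalence : Equivalence (BraceletEquiv (α := α)) where
  refl l := .inl (.refl l)
  symm := by
    rintro l l' (h | h)
    · exact .inl h.symm
    · exact .inr (invRev_isRotated_iff.2 h.symm)
  trans := by
    rintro l l' l'' (h | h) (h' | h')
    · exact .inl (h.trans h')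
    · exact .inr ((isRotated_invRev h).trans h')
    · exact .inr (h.trans h')
    · exact .inl ((invRev_isRotated_iff.1 h).trans h')

theorem rotationPeriod_eq_of_braceletEquiv {l l' : List (α × Bool)} (h : BraceletEquiv l l') :
    rotationPeriod l = rotationPeriod l' := by
  obtain h | h := h
  · exact rotationPeriod_eq_of_isRotated h
  · rw [← rotationPeriod_invRev, rotationPeriod_eq_of_isRotated h]

theorem ncard_setOf_braceletEquiv {l : List (α × Bool)} (hl : FreeGroup.IsReduced l)
    (hne : l ≠ []) : {l' | BraceletEquiv l l'}.ncard = 2 * rotationPeriod l := by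
  have hunion : {l' | BraceletEquiv l l'} = {l' | l ~r l'} ∪ {l' | invRev l ~r l'} := rfl
  have hdisj : Disjoint {l' | l ~r l'} {l' | invRev l ~r l'} :=
    Set.disjoint_left.2 fun l' h h' ↦ not_isRotated_invRev hl hne (h.trans h'.symm)
  have hfin (l : List (α × Bool)) : {l' | l ~r l'}.Finite :=
    Set.finite_of_ncard_pos (by rw [ncard_setOf_isRotated]; exact rotationPeriod_pos l)
  rw [hunion, Set.ncard_union_eq hdisj (hfin l) (hfin _), ncard_setOf_isRotated,
    ncard_setOf_isRotated, rotationPeriod_invRev, two_mul]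

theorem eq_mk_not_comm {a b : α × Bool} : b = (a.1, !a.2) ↔ a = (b.1, !b.2) := by
  constructor <;> rintro rfl <;> simp

theorem relMatrix_nonCancelling_apply [DecidableEq α] (a b : α × Bool) :
    relMatrix ℤ NonCancelling a b = 1 - if b = (a.1, !a.2) then 1 else 0 := by
  by_cases h : b = (a.1, !a.2) <;> simp [relMatrix, nonCancelling_iff, h]

section Fintype

variable [Fintype α] [DecidableEq α]

theorem of_one_mul_relMatrix_nonCancelling :
    Matrix.of 1 * relMatrix ℤ (NonCancelling (α := α)) =
      (2 * Fintype.card α - 1 : ℤ) • Matrix.of 1 := by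
  ext a b
  simp [Matrix.mul_apply, relMatrix_nonCancelling_apply, eq_mk_not_comm (b := b), mul_comm]

-- The matrix is `J - P` for `J` the all-ones matrix and `P` the permutation matrix of letter
-- inversion, with `P ^ 2 = 1` and `J * P = P * J = J`.
theorem relMatrix_nonCancelling_sq :
    relMatrix ℤ (NonCancelling (α := α)) ^ 2 =
      1 + (2 * Fintype.card α - 2 : ℤ) • Matrix.of 1 := by
  ext a b
  have hentry : (relMatrix ℤ NonCancelling ^ 2 : Matrix (α × Bool) (α × Bool) ℤ) a b =
      2 * Fintype.card α - 1 - (1 - if a = b then 1 else 0) := by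
    simp [sq, Matrix.mul_apply, relMatrix_nonCancelling_apply, eq_mk_not_comm (b := b), mul_sub,
      Prod.ext_iff (x := a), mul_comm, eq_comm]
  simp only [hentry, Matrix.add_apply, Matrix.one_apply, Matrix.smul_apply, Matrix.of_apply,
    Pi.one_apply, smul_eq_mul]
  ring

theorem relMatrix_nonCancelling_pow_add_two (n : ℕ) :
    relMatrix ℤ (NonCancelling (α := α)) ^ (n + 2) = relMatrix ℤ NonCancelling ^ n +
      ((2 * Fintype.card α - 2) * (2 * Fintype.card α - 1) ^ n : ℤ) • Matrix.of 1 := by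
  induction n with
  | zero => simp [relMatrix_nonCancelling_sq]
  | succ n ih =>
    rw [show n + 1 + 2 = n + 2 + 1 by rfl, pow_succ, ih, add_mul, smul_mul_assoc,
      of_one_mul_relMatrix_nonCancelling, smul_smul, mul_assoc, ← pow_succ, ← pow_succ]

theorem trace_relMatrix_nonCancelling_pow (n : ℕ) :
    (relMatrix ℤ (NonCancelling (α := α)) ^ n).trace =
      (2 * Fintype.card α - 1) ^ n + (Fintype.card α - 1) * (1 + (-1) ^ n) + 1 := by
  induction n using Nat.twoStepInduction with
  | zero =>
    rw [pow_zero, Matrix.trace_one, Fintype.card_prod, Fintype.card_bool]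
    push_cast
    ring
  | one => simp [Matrix.trace, relMatrix, NonCancelling]; ring
  | more n ih _ =>
    rw [relMatrix_nonCancelling_pow_add_two, Matrix.trace_add, ih, Matrix.trace_smul]
    have htrace : (Matrix.of 1 : Matrix (α × Bool) (α × Bool) ℤ).trace = 2 * Fintype.card α := by
      simp [Matrix.trace, mul_comm]
    rw [htrace, smul_eq_mul]
    ring

end Fintype

theorem cast_ncard_isCyclicallyReduced [Fintype α] {n : ℕ} (hn : n ≠ 0) :
    ({l : List (α × Bool) | l.length = n ∧ IsCyclicallyReduced l}.ncard : ℤ) =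
      (2 * Fintype.card α - 1) ^ n + (Fintype.card α - 1) * (1 + (-1) ^ n) + 1 := by
  classical
  simp only [isCyclicallyReduced_iff_cycleChain]
  rw [cast_ncard_cycleChain_eq_trace_relMatrix_pow ℤ _ hn, trace_relMatrix_nonCancelling_pow]

end FreeGroup

section LyndonBracelet

open List FreeGroup

theorem wordInv_eq_invRev (l : List (Fin 2 × Bool)) : wordInv l = invRev l := rfl

theorem cyclicallyReduced_iff {l : List (Fin 2 × Bool)} :
    CyclicallyReduced l ↔ IsCyclicallyReduced l := by
  have hletter {a b : Fin 2 × Bool} : b ≠ invLetter a ↔ NonCancelling a b :=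
    nonCancelling_iff.symm
  simp only [CyclicallyReduced, FreelyReduced, hletter]
  exact and_congr_right fun _ ↦ ⟨fun h a ha b hb ↦ h b hb a ha, fun h b hb a ha ↦ h a ha b hb⟩

theorem isProperPower_iff {l : List (Fin 2 × Bool)} :
    IsProperPower l ↔ rotationPeriod l < l.length :=
  rotationPeriod_lt_length_iff.symm

theorem CRWord.val_injective (n : ℕ) :
    Function.Injective (Subtype.val : CRWord n → List (Fin 2 × Bool)) :=
  Subtype.val_injective

instance (n : ℕ) : Finite (CRWord n) :=
  ((finite_length_eq (Fin 2 × Bool) n).subset fun _ hl ↦ hl.1).to_subtype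

theorem cyclicallyReduced_of_braceletEquiv {l l' : List (Fin 2 × Bool)} (h : BraceletEquiv l l')
    (hl : CyclicallyReduced l) : CyclicallyReduced l' := by
  rw [cyclicallyReduced_iff] at hl ⊢
  obtain h | h := h
  · exact isCyclicallyReduced_of_isRotated h hl
  · exact isCyclicallyReduced_of_isRotated h (isCyclicallyReduced_invRev hl)

theorem length_eq_of_braceletEquiv {α : Type*} {l l' : List (α × Bool)} (h : BraceletEquiv l l') :
    l.length = l'.length := by
  obtain h | h := h
  · exact h.perm.length_eq
  · rw [← h.perm.length_eq, invRev_length]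

theorem quot_mk_braceletStep_eq_of_isRotated {n : ℕ} {x y : CRWord n} (h : x.val ~r y.val) :
    Quot.mk (braceletStep n) x = Quot.mk (braceletStep n) y := by
  obtain ⟨i, h⟩ := h
  induction i generalizing y with
  | zero => rw [Subtype.ext ((rotate_zero _).symm.trans h)]
  | succ i ih =>
    let z : CRWord n := ⟨x.val.rotate i, (length_rotate _ _).trans x.2.1,
      cyclicallyReduced_of_braceletEquiv (.inl ⟨i, rfl⟩) x.2.2⟩
    exact (ih (y := z) rfl).trans (Quot.sound (.inl (h.symm.trans (rotate_rotate _ _ _).symm)))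

theorem quot_mk_braceletStep_eq_iff {n : ℕ} {x y : CRWord n} :
    Quot.mk (braceletStep n) x = Quot.mk (braceletStep n) y ↔ BraceletEquiv x.val y.val := by
  constructor
  · intro h
    refine (braceletEquiv_equivalence.comap Subtype.val).eqvGen_iff.1
      ((Quot.eqvGen_exact h).mono fun x y hxy ↦ ?_)
    obtain hrotate | hinv := hxy
    · exact .inl ⟨1, hrotate.symm⟩
    · exact .inr (wordInv_eq_invRev x.val ▸ hinv ▸ .refl _)
  · rintro (h | h)
    · exact quot_mk_braceletStep_eq_of_isRotated h
    · let z : CRWord n := ⟨invRev x.val, invRev_length.trans x.2.1,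
        cyclicallyReduced_of_braceletEquiv (.inr (.refl _)) x.2.2⟩
      calc Quot.mk (braceletStep n) x
          = Quot.mk (braceletStep n) z := Quot.sound (.inr (wordInv_eq_invRev x.val).symm)
        _ = Quot.mk (braceletStep n) y := quot_mk_braceletStep_eq_of_isRotated h

theorem ncard_fiber_quot_mk_braceletStep {n : ℕ} (hn : n ≠ 0) (x : CRWord n) :
    {y : CRWord n | Quot.mk (braceletStep n) y = Quot.mk (braceletStep n) x}.ncard =
      2 * rotationPeriod x.val := by
  have hne : x.val ≠ [] := ne_nil_of_length_pos (x.2.1.symm ▸ Nat.pos_of_ne_zero hn)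
  have himage : Subtype.val '' {y : CRWord n | Quot.mk (braceletStep n) y =
      Quot.mk (braceletStep n) x} = {l | BraceletEquiv x.val l} := by
    ext l
    constructor
    · rintro ⟨y, hy, rfl⟩
      exact quot_mk_braceletStep_eq_iff.1 hy.symm
    · intro (hl : BraceletEquiv x.val l)
      exact ⟨⟨l, (length_eq_of_braceletEquiv hl).symm.trans x.2.1,
        cyclicallyReduced_of_braceletEquiv hl x.2.2⟩, (quot_mk_braceletStep_eq_iff.2 hl).symm, rfl⟩
  calc {y : CRWord n | Quot.mk (braceletStep n) y = Quot.mk (braceletStep n) x}.ncard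
      = {l | BraceletEquiv x.val l}.ncard :=
        himage ▸ (Set.ncard_image_of_injective _ (CRWord.val_injective n)).symm
    _ = 2 * rotationPeriod x.val :=
        ncard_setOf_braceletEquiv (cyclicallyReduced_iff.1 x.2.2).isReduced hne

theorem forall_not_isProperPower_iff {n : ℕ} (hn : n ≠ 0) (x : CRWord n) :
    (∀ y, Quot.mk (braceletStep n) y = Quot.mk (braceletStep n) x → ¬ IsProperPower y.val) ↔
      rotationPeriod x.val = n := by
  simp only [isProperPower_iff, not_lt]
  constructor
  · intro h
    refine (Nat.le_of_dvd (Nat.pos_of_ne_zero hn) ?_).antisymm (x.2.1.ge.trans (h x rfl))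
    exact (rotationPeriod_dvd_length x.val).trans x.2.1.dvd
  · rintro h y hy
    rw [rotationPeriod_eq_of_braceletEquiv (quot_mk_braceletStep_eq_iff.1 hy), h, y.2.1]

theorem ncard_setOf_rotationPeriod_eq_length {n : ℕ} (hn : n ≠ 0) :
    {l : List (Fin 2 × Bool) | l.length = n ∧ IsCyclicallyReduced l ∧ rotationPeriod l = n}.ncard =
      2 * n * lyndonBraceletCount n := by
  have himage : Subtype.val '' {x : CRWord n | rotationPeriod x.val = n} =
      {l | l.length = n ∧ IsCyclicallyReduced l ∧ rotationPeriod l = n} := by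
    ext l
    constructor
    · rintro ⟨x, hx, rfl⟩
      exact ⟨x.2.1, cyclicallyReduced_iff.1 x.2.2, hx⟩
    · rintro ⟨hlen, hl, hper⟩
      exact ⟨⟨l, hlen, cyclicallyReduced_iff.2 hl⟩, hper, rfl⟩
  rw [← himage, Set.ncard_image_of_injective _ (CRWord.val_injective n), mul_comm]
  let L : Set (Quot (braceletStep n)) :=
    {c | ∀ x : CRWord n, Quot.mk (braceletStep n) x = c → ¬ IsProperPower x.val}
  refine ncard_eq_ncard_mul_of_ncard_fiber_eq (Set.toFinite _) (Set.toFinite L)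
    (fun x hx ↦ (forall_not_isProperPower_iff hn x).2 hx) ?_
  rintro ⟨x⟩ hx
  replace hx : rotationPeriod x.val = n := (forall_not_isProperPower_iff hn x).1 hx
  convert ncard_fiber_quot_mk_braceletStep hn x using 2
  · ext y
    refine ⟨And.right, fun hy ↦ ⟨?_, hy⟩⟩
    exact (rotationPeriod_eq_of_braceletEquiv (quot_mk_braceletStep_eq_iff.1 hy)).trans hx
  · exact hx.symm

theorem sum_divisors_lyndonBraceletCount {n : ℕ} (hn : n ≠ 0) :
    ∑ d ∈ n.divisors, (2 * d * lyndonBraceletCount d : ℤ) = 3 ^ n + 2 + (-1) ^ n := by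
  have hcount := cast_ncard_isCyclicallyReduced (α := Fin 2) hn
  rw [ncard_setOf_length_eq_sum_divisors isCyclicallyReduced_flatten_replicate_iff hn,
    Nat.cast_sum] at hcount
  calc ∑ d ∈ n.divisors, (2 * d * lyndonBraceletCount d : ℤ)
      = ∑ d ∈ n.divisors, ({l : List (Fin 2 × Bool) |
          l.length = d ∧ IsCyclicallyReduced l ∧ rotationPeriod l = d}.ncard : ℤ) := by
        refine Finset.sum_congr rfl fun d hd ↦ ?_
        rw [ncard_setOf_rotationPeriod_eq_length (Nat.pos_of_mem_divisors hd).ne']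
        push_cast
        rfl
    _ = 3 ^ n + 2 + (-1) ^ n := by
        rw [hcount, Fintype.card_fin]
        norm_num
        ring

open ArithmeticFunction ArithmeticFunction.Moebius in
theorem lyndonBraceletCount_eq_general {n : ℕ} (hn : n ≠ 0) :
    (2 * n * lyndonBraceletCount n : ℤ) =
      ∑ x ∈ n.divisorsAntidiagonal, μ x.1 * (3 ^ x.2 + 2 + (-1) ^ x.2) :=
  ((sum_eq_iff_sum_mul_moebius_eq (R := ℤ)).1
    (fun _ hm ↦ sum_divisors_lyndonBraceletCount hm.ne') n (Nat.pos_of_ne_zero hn)).symm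

open ArithmeticFunction.Moebius in
theorem lyndonBraceletCount_eq_iff {n c : ℕ} (hn : n ≠ 0) :
    lyndonBraceletCount n = c ↔
      ∑ x ∈ n.divisorsAntidiagonal, μ x.1 * (3 ^ x.2 + 2 + (-1) ^ x.2) = (2 * n * c : ℤ) := by
  rw [← lyndonBraceletCount_eq_general hn, mul_right_inj' (by positivity), Nat.cast_inj]

end LyndonBracelet

/-- The counts of reduced bracelets on two generators of lengths 1 through 10
that are not proper powers. -/
theorem lyndonBraceletCount_eq :
    lyndonBraceletCount 1 = 2 ∧ lyndonBraceletCount 2 = 2 ∧ lyndonBraceletCount 3 = 4 ∧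
    lyndonBraceletCount 4 = 9 ∧ lyndonBraceletCount 5 = 24 ∧ lyndonBraceletCount 6 = 58 ∧
    lyndonBraceletCount 7 = 156 ∧ lyndonBraceletCount 8 = 405 ∧
    lyndonBraceletCount 9 = 1092 ∧ lyndonBraceletCount 10 = 2940 := by
  refine ⟨?_, ?_, ?_, ?_, ?_, ?_, ?_, ?_, ?_, ?_⟩ <;>
    exact (lyndonBraceletCount_eq_iff (by norm_num)).2 (by decide +kernel)
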